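/- Let A(z) = (az² + bz + c)/(dz² + ez + f) be a rational function over ℂ of degree two. Then the group Σ(A) of Möbius transformations μ with A ∘ μ = A is a cyclic group of order two generated by the Möbius transformation μ_A(z) = ((cd − af)z + (ce − bf)) / ((ae − bd)z + (af − cd)). -/

import Mathlib

/-!
All maps are written in homogeneous coordinates on `ℂℙ¹`. With `α = ae - bd`, `β = af - cd`,
`γ = bf - ce`, and `P`, `Q` the homogenized numerator and denominator of `A`, the Bezout
factorization reads
`P(u,v) Q(s,t) - P(s,t) Q(u,v) = (ut - vs) (α us + β (ut + vs) + γ vt)`.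
Hence `A x = A y` iff `y = x` or the symmetric bilinear relation
`α us + β (ut + vs) + γ vt = 0` holds between `x = [u : v]` and `y = [s : t]`. Solving it for `y`
gives exactly `y = μ_A x`, the determinant of `μ_A` being, up to sign, the resultant
`β² - αγ` of `P` and `Q`, which is non-zero by coprimality (`resultant_ne_zero`). Symmetry of the
relation makes `μ_A` an involution, and the description of the fibers gives `A ∘ μ_A = A`.

If `A ∘ μ = A`, then at each point `μ` agrees with the identity or with `μ_A`; so the product of
the two quadratic polynomials expressing these agreements vanishes identically, one of them is
zero, and `μ` agrees everywhere with the identity or everywhere with `μ_A`.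
-/

open Polynomial

noncomputable section

/-- The degree of a rational function `A = P/Q` (with `P, Q` coprime):
`max (deg P) (deg Q)`. -/
def rdeg (A : RatFunc ℂ) : ℕ := max A.num.natDegree A.denom.natDegree

/-- The holomorphic self-map of `ℂℙ¹` (modeled as `OnePoint ℂ`) induced by a
rational function `A = P/Q`. -/
def rmap (A : RatFunc ℂ) : OnePoint ℂ → OnePoint ℂ := fun z =>
  match z with
  | none =>        -- the point at infinity
      if A.num.natDegree = A.denom.natDegree then
        ((A.num.leadingCoeff / A.denom.leadingCoeff : ℂ) : OnePoint ℂ)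
      else if A.denom.natDegree < A.num.natDegree then OnePoint.infty
      else ((0 : ℂ) : OnePoint ℂ)
  | some z₀ =>     -- a finite point
      if A.denom.eval z₀ = 0 then OnePoint.infty
      else ((A.num.eval z₀ / A.denom.eval z₀ : ℂ) : OnePoint ℂ)

/-- The set `V(A)` of critical values of a rational function `A` of degree `m`:
points whose fiber contains fewer than `m` points. -/
def critVals (A : RatFunc ℂ) : Set (OnePoint ℂ) :=
  {w | (rmap A ⁻¹' {w}).ncard < rdeg A}

/-- Composition of rational functions (as rational functions): for `A = P/Q`,
`rcomp A B = P(B)/Q(B)`. -/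
def rcomp (A B : RatFunc ℂ) : RatFunc ℂ :=
  Polynomial.aeval B A.num / Polynomial.aeval B A.denom

/-- The plane algebraic curve `h_{A,B} : A₁(x)B₂(y) − A₂(x)B₁(y) = 0` associated with
rational functions `A = A₁/A₂` and `B = B₁/B₂` written as ratios of coprime polynomials,
given here by its defining bivariate polynomial. -/
def curvePoly (A B : RatFunc ℂ) : MvPolynomial (Fin 2) ℂ :=
  Polynomial.aeval (MvPolynomial.X 0 : MvPolynomial (Fin 2) ℂ) A.num *
      Polynomial.aeval (MvPolynomial.X 1 : MvPolynomial (Fin 2) ℂ) B.denom -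
    Polynomial.aeval (MvPolynomial.X 0 : MvPolynomial (Fin 2) ℂ) A.denom *
      Polynomial.aeval (MvPolynomial.X 1 : MvPolynomial (Fin 2) ℂ) B.num

/-- The local degree (local multiplicity) `deg_z A` of a rational function `A = P/Q`
at a point `z ∈ ℂℙ¹`. -/
def localDeg (A : RatFunc ℂ) : OnePoint ℂ → ℕ := fun z =>
  match z with
  | none =>        -- the point at infinity
      if A.denom.natDegree < A.num.natDegree then
        A.num.natDegree - A.denom.natDegree
      else if A.num.natDegree < A.denom.natDegree then
        A.denom.natDegree - A.num.natDegree
      else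
        A.denom.natDegree -
          (A.num - Polynomial.C (A.num.leadingCoeff / A.denom.leadingCoeff) * A.denom).natDegree
  | some z₀ =>     -- a finite point
      if A.denom.eval z₀ = 0 then A.denom.rootMultiplicity z₀
      else (A.num - Polynomial.C (A.num.eval z₀ / A.denom.eval z₀) * A.denom).rootMultiplicity z₀

open scoped Classical in
/-- The ramification function `ν₂^A` of the orbifold `𝒪₂^A`: `ν₂^A(z)` is the least
common multiple of the local degrees of `A` at the points of the fiber `A⁻¹{z}`. -/
def nu2 (A : RatFunc ℂ) (w : OnePoint ℂ) : ℕ :=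
  if h : (rmap A ⁻¹' {w}).Finite then h.toFinset.lcm (localDeg A) else 1

/-- The ramification function `ν₁^A` of the orbifold `𝒪₁^A`:
`ν₁^A(z) = ν₂^A(A(z)) / deg_z A`. -/
def nu1 (A : RatFunc ℂ) (z : OnePoint ℂ) : ℕ := nu2 A (rmap A z) / localDeg A z

/-- A rational function of degree `m ≥ 2` is simple if every fiber contains at least
`m − 1` points. -/
def IsSimple (A : RatFunc ℂ) : Prop :=
  2 ≤ rdeg A ∧ ∀ w : OnePoint ℂ, rdeg A - 1 ≤ (rmap A ⁻¹' {w}).ncard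

/-- A Lattès map: a rational function `A` admitting a ramification function
`ν : ℂℙ¹ → ℕ≥1`, equal to `1` outside a finite set but not identically `1`, with
`ν(A(z)) = ν(z)·deg_z A` for all `z`. -/
def IsLattes (A : RatFunc ℂ) : Prop :=
  ∃ ν : OnePoint ℂ → ℕ, (∀ z, 1 ≤ ν z) ∧ {z | ν z ≠ 1}.Finite ∧ (∃ z, ν z ≠ 1) ∧
    ∀ z, ν (rmap A z) = ν z * localDeg A z

/-- A generalized Lattès map: a rational function `A` admitting a ramification function
`ν : ℂℙ¹ → ℕ≥1`, equal to `1` outside a finite set but not identically `1`, defining a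
good orbifold of non-negative Euler characteristic, with
`ν(A(z)) = ν(z)·gcd(deg_z A, ν(A(z)))` for all `z`. -/
def IsGenLattes (A : RatFunc ℂ) : Prop :=
  ∃ ν : OnePoint ℂ → ℕ, (∀ z, 1 ≤ ν z) ∧ (∃ z, ν z ≠ 1) ∧
    (∃ hfin : {z | ν z ≠ 1}.Finite,
      (0 : ℚ) ≤ 2 + ∑ z ∈ hfin.toFinset, (((ν z : ℚ))⁻¹ - 1)) ∧
    -- the orbifold is good, i.e. not a bad spherical orbifold (one singular point, or
    -- two singular points with distinct ramification indices)
    ¬ (∃ z, ν z ≠ 1 ∧ ∀ w, w ≠ z → ν w = 1) ∧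
    ¬ (∃ z w, z ≠ w ∧ ν z ≠ 1 ∧ ν w ≠ 1 ∧ ν z ≠ ν w ∧ ∀ u, u ≠ z → u ≠ w → ν u = 1) ∧
    ∀ z, ν (rmap A z) = ν z * Nat.gcd (localDeg A z) (ν (rmap A z))

/-- The polynomial `∑ cᵢ Xⁱ` with coefficient vector `c`. -/
def polyOfVec {m : ℕ} (c : Fin (m + 1) → ℂ) : Polynomial ℂ :=
  ∑ i : Fin (m + 1), Polynomial.C (c i) * Polynomial.X ^ (i : ℕ)

/-- Membership of a coefficient vector (of a pair of polynomials of degree ≤ m) in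
`Rat_m ⊆ ℂℙ^{2m+1}`: the corresponding pair `(P, Q)` is coprime with
`max (deg P) (deg Q) = m` (equivalently, the resultant does not vanish). -/
def InRat (m : ℕ) (c : Fin 2 × Fin (m + 1) → ℂ) : Prop :=
  IsCoprime (polyOfVec fun i => c (0, i)) (polyOfVec fun i => c (1, i)) ∧
    max (polyOfVec fun i => c (0, i)).natDegree (polyOfVec fun i => c (1, i)).natDegree = m

/-- The degree-`m` rational function `P/Q` associated with a coefficient vector in
`Rat_m`. -/
def ratOf (m : ℕ) (c : Fin 2 × Fin (m + 1) → ℂ) : RatFunc ℂ :=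
  algebraMap (Polynomial ℂ) (RatFunc ℂ) (polyOfVec fun i => c (0, i)) /
    algebraMap (Polynomial ℂ) (RatFunc ℂ) (polyOfVec fun i => c (1, i))

/-- The composition `G_{r-1} ∘ ⋯ ∘ G_1 ∘ G_0` (index `0` innermost) of a tuple of
rational functions, as a self-map of `ℂℙ¹`. -/
def compFin {r : ℕ} (G : Fin r → RatFunc ℂ) : OnePoint ℂ → OnePoint ℂ :=
  (List.ofFn fun i => rmap (G i)).foldl (fun f g => g ∘ f) id

/-- A rational function is indecomposable if it has degree ≥ 2 and in every
factorization `A = B ∘ C` into rational functions, one of the factors has degree one. -/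
def Indecomp (A : RatFunc ℂ) : Prop :=
  2 ≤ rdeg A ∧ ∀ B C : RatFunc ℂ, rmap A = rmap B ∘ rmap C → rdeg B = 1 ∨ rdeg C = 1

/-- Equivalence of two decompositions `G_{r-1} ∘ ⋯ ∘ G_0` and `H_{r-1} ∘ ⋯ ∘ H_0`
(of the same length, index `0` innermost) of a rational function: there is a chain of
Möbius transformations `μ_0 = id, μ_1, …, μ_{r-1}, μ_r = id` with
`μ_{i+1} ∘ G_i = H_i ∘ μ_i` for all `i`, i.e. `G_i = μ_{i+1}⁻¹ ∘ H_i ∘ μ_i`. -/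
def EquivDec {r : ℕ} (G H : Fin r → RatFunc ℂ) : Prop :=
  ∃ μ : Fin (r + 1) → RatFunc ℂ,
    (∀ j, rdeg (μ j) = 1) ∧ rmap (μ 0) = id ∧ rmap (μ (Fin.last r)) = id ∧
    ∀ i : Fin r, rmap (μ i.succ) ∘ rmap (G i) = rmap (H i) ∘ rmap (μ i.castSucc)

/-- The iterates of `A` admit no non-trivial decompositions: for every `n ≥ 1`, every
decomposition of `A^∘n` into a composition of indecomposable rational functions is
equivalent to the decomposition `A^∘n = A ∘ A ∘ ⋯ ∘ A`. -/
def NoNontrivDec (A : RatFunc ℂ) : Prop :=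
  ∀ n : ℕ, 1 ≤ n → ∀ r : ℕ, ∀ G : Fin r → RatFunc ℂ,
    (∀ i, Indecomp (G i)) → (rmap A)^[n] = compFin G →
    r = n ∧ EquivDec G (fun _ => A)

/-- The affine zero locus in `ℂ²` of a bivariate polynomial. -/
def zlocus (p : MvPolynomial (Fin 2) ℂ) : Set (ℂ × ℂ) :=
  {q | MvPolynomial.eval ![q.1, q.2] p = 0}

/-- The inclusion `ℂ² ↪ ℂℙ¹ × ℂℙ¹`. -/
def emb : ℂ × ℂ → OnePoint ℂ × OnePoint ℂ := fun q => ((q.1 : OnePoint ℂ), (q.2 : OnePoint ℂ))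

/-- The endomorphism `(A₁, A₂) : (z₁, z₂) ↦ (A₁(z₁), A₂(z₂))` of `(ℂℙ¹)²`. -/
def prodMap (A₁ A₂ : RatFunc ℂ) : OnePoint ℂ × OnePoint ℂ → OnePoint ℂ × OnePoint ℂ :=
  fun q => (rmap A₁ q.1, rmap A₂ q.2)

/-- `(A₁,A₂)^∘k(C) = C` for the irreducible projective curve `C ⊆ (ℂℙ¹)²` with affine
part `zlocus p`: since distinct irreducible curves meet in finitely many points and the
affine part misses only finitely many points of `C`, this is equivalent to the image of
the affine part of `C` under `(A₁,A₂)^∘k` meeting `C` in infinitely many points. -/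
def PerCond (A₁ A₂ : RatFunc ℂ) (p : MvPolynomial (Fin 2) ℂ) (k : ℕ) : Prop :=
  (((prodMap A₁ A₂)^[k] '' (emb '' zlocus p)) ∩ emb '' zlocus p).Infinite

/-- The point of `ℂℙ¹` with homogeneous coordinates `[u : v]`, where `ℂℙ¹` is modeled as
`OnePoint ℂ`. The junk value `[0 : 0]` is the point at infinity. -/
def homPt (u v : ℂ) : OnePoint ℂ := if v = 0 then OnePoint.infty else ((u / v : ℂ) : OnePoint ℂ)

theorem homPt_eq_iff {u v s t : ℂ} (h : u ≠ 0 ∨ v ≠ 0) (h' : s ≠ 0 ∨ t ≠ 0) :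
    homPt u v = homPt s t ↔ u * t = s * v := by
  unfold homPt
  by_cases hv : v = 0 <;> by_cases ht : t = 0
  · simp [hv, ht]
  · have hu : u ≠ 0 := by tauto
    simp [hv, ht, hu]
  · have hs : s ≠ 0 := by tauto
    simp [hv, ht, hs]
  · simp only [hv, ht, if_false, OnePoint.coe_eq_coe]
    exact div_eq_div_iff hv ht

theorem exists_homPt (x : OnePoint ℂ) : ∃ u v : ℂ, (u ≠ 0 ∨ v ≠ 0) ∧ x = homPt u v := by
  induction x using OnePoint.rec with
  | infty => exact ⟨1, 0, by simp, by simp [homPt]⟩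
  | coe z => exact ⟨z, 1, by simp, by simp [homPt]⟩

theorem IsCoprime.eval_ne_zero_or {p q : ℂ[X]} (h : IsCoprime p q) (z : ℂ) :
    p.eval z ≠ 0 ∨ q.eval z ≠ 0 := by
  obtain ⟨U, V, h⟩ := h
  by_contra! hz
  simpa [hz.1, hz.2] using congrArg (Polynomial.eval z) h

/-- A fraction of coprime polynomials is in lowest terms: it agrees with the normalized
numerator and denominator up to a common non-zero constant. -/
theorem exists_num_denom {p q : ℂ[X]} (h : IsCoprime p q) (hq : q ≠ 0) (A : RatFunc ℂ)
    (hA : A = algebraMap ℂ[X] (RatFunc ℂ) p / algebraMap ℂ[X] (RatFunc ℂ) q) :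
    ∃ w : ℂ, w ≠ 0 ∧ p = C w * A.num ∧ q = C w * A.denom := by
  have hd := A.denom_ne_zero
  have key : A.num * q = p * A.denom := (RatFunc.num_mul_eq_mul_denom_iff hq).2 hA
  have h1 : A.denom ∣ q := by rw [hA]; exact RatFunc.denom_div_dvd p q
  have h2 : q ∣ A.denom := by
    refine h.symm.dvd_of_dvd_mul_left ⟨A.num, ?_⟩
    rw [← key, mul_comm]
  obtain ⟨w, hw⟩ := associated_of_dvd_dvd h1 h2
  obtain ⟨r, hr, hrw⟩ := Polynomial.isUnit_iff.1 w.isUnit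
  rw [← hrw] at hw
  refine ⟨r, hr.ne_zero, ?_, by rw [← hw, mul_comm]⟩
  apply mul_right_cancel₀ hd
  rw [← key, ← hw]; ring

/-- For coprime `p`, `q` of degree at most `n`, not both of smaller degree, the map induced by
`p / q` is `z ↦ [p(z) : q(z)]` on `ℂ`, sends `∞` to `[pₙ : qₙ]`, and these homogeneous
coordinates never vanish simultaneously. -/
theorem rmap_div {p q : ℂ[X]} (h : IsCoprime p q) (hq : q ≠ 0) (n : ℕ) (hpn : p.natDegree ≤ n)
    (hqn : q.natDegree ≤ n) (hn : p.coeff n ≠ 0 ∨ q.coeff n ≠ 0) (A : RatFunc ℂ)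
    (hA : A = algebraMap ℂ[X] (RatFunc ℂ) p / algebraMap ℂ[X] (RatFunc ℂ) q) :
    rdeg A = n ∧ (∀ z : ℂ, rmap A z = homPt (p.eval z) (q.eval z)) ∧
      rmap A OnePoint.infty = homPt (p.coeff n) (q.coeff n) := by
  obtain ⟨w, hw, hp', hq'⟩ := exists_num_denom h hq A hA
  have hdp : p.natDegree = A.num.natDegree := by rw [hp', natDegree_C_mul hw]
  have hdq : q.natDegree = A.denom.natDegree := by rw [hq', natDegree_C_mul hw]
  have hmax : max A.num.natDegree A.denom.natDegree = n := by
    rw [← hdp, ← hdq]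
    apply le_antisymm (max_le hpn hqn)
    rcases hn with hn | hn
    · exact le_max_of_le_left (le_natDegree_of_ne_zero hn)
    · exact le_max_of_le_right (le_natDegree_of_ne_zero hn)
  refine ⟨hmax, fun z => ?_, ?_⟩
  · change (if A.denom.eval z = 0 then OnePoint.infty
      else ((A.num.eval z / A.denom.eval z : ℂ) : OnePoint ℂ)) = _
    rw [hp', hq', homPt]
    simp only [eval_mul, eval_C, mul_eq_zero, hw, false_or, mul_div_mul_left _ _ hw]
  · change (if A.num.natDegree = A.denom.natDegree then
        ((A.num.leadingCoeff / A.denom.leadingCoeff : ℂ) : OnePoint ℂ)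
      else if A.denom.natDegree < A.num.natDegree then OnePoint.infty
      else ((0 : ℂ) : OnePoint ℂ)) = _
    have hd := A.denom_ne_zero
    rw [hp', hq', homPt]
    simp only [coeff_C_mul, mul_eq_zero, hw, false_or, mul_div_mul_left _ _ hw]
    rcases lt_trichotomy A.num.natDegree A.denom.natDegree with hlt | heq | hgt
    · have e : A.denom.natDegree = n := by omega
      have e2 : A.num.coeff n = 0 := coeff_eq_zero_of_natDegree_lt (by omega)
      have e3 : A.denom.coeff n ≠ 0 := by rw [← e]; simpa using hd
      rw [if_neg hlt.ne, if_neg hlt.not_gt, if_neg e3, e2, zero_div]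
    · have e : A.denom.natDegree = n := by omega
      have e3 : A.denom.coeff n ≠ 0 := by rw [← e]; simpa using hd
      rw [if_pos heq, if_neg e3, leadingCoeff, leadingCoeff, heq, e]
    · have e2 : A.denom.coeff n = 0 := coeff_eq_zero_of_natDegree_lt (by omega)
      rw [if_neg hgt.ne', if_pos hgt, if_pos e2]

theorem rmap_linear {p q r s : ℂ} (h : IsCoprime (C p * X + C q) (C r * X + C s))
    (hq : C r * X + C s ≠ 0) (hn : p ≠ 0 ∨ r ≠ 0) (A : RatFunc ℂ)
    (hA : A = algebraMap ℂ[X] (RatFunc ℂ) (C p * X + C q) /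
      algebraMap ℂ[X] (RatFunc ℂ) (C r * X + C s)) :
    rdeg A = 1 ∧ ∀ u v : ℂ, (u ≠ 0 ∨ v ≠ 0) → (p * u + q * v ≠ 0 ∨ r * u + s * v ≠ 0) ∧
      rmap A (homPt u v) = homPt (p * u + q * v) (r * u + s * v) := by
  obtain ⟨h1, h2, h3⟩ := rmap_div h hq 1 natDegree_linear_le natDegree_linear_le
    (by simpa using hn) A hA
  refine ⟨h1, fun u v huv => ?_⟩
  by_cases hv : v = 0
  · subst hv
    have hu : u ≠ 0 := by tauto
    have hne : p * u + q * 0 ≠ 0 ∨ r * u + s * 0 ≠ 0 := by simpa [hu] using hn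
    refine ⟨hne, ?_⟩
    have : homPt u 0 = OnePoint.infty := by simp [homPt]
    rw [this, h3, homPt_eq_iff (by simpa using hn) hne]
    simp; ring
  · have e1 : p * u + q * v = v * (p * (u / v) + q) := by field_simp
    have e2 : r * u + s * v = v * (r * (u / v) + s) := by field_simp
    have hev := h.eval_ne_zero_or (u / v)
    have hne : p * u + q * v ≠ 0 ∨ r * u + s * v ≠ 0 := by
      rw [e1, e2]; simpa [hv] using hev
    refine ⟨hne, ?_⟩
    have : homPt u v = ((u / v : ℂ) : OnePoint ℂ) := by simp [homPt, hv]
    rw [this, h2, homPt_eq_iff hev hne, e1, e2]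
    simp; ring

theorem rmap_quadratic {a b c d e f : ℂ}
    (h : IsCoprime (C a * X ^ 2 + C b * X + C c) (C d * X ^ 2 + C e * X + C f))
    (hq : C d * X ^ 2 + C e * X + C f ≠ 0) (hn : a ≠ 0 ∨ d ≠ 0) (A : RatFunc ℂ)
    (hA : A = algebraMap ℂ[X] (RatFunc ℂ) (C a * X ^ 2 + C b * X + C c) /
      algebraMap ℂ[X] (RatFunc ℂ) (C d * X ^ 2 + C e * X + C f)) (u v : ℂ) (huv : u ≠ 0 ∨ v ≠ 0) :
    (a * u ^ 2 + b * u * v + c * v ^ 2 ≠ 0 ∨ d * u ^ 2 + e * u * v + f * v ^ 2 ≠ 0) ∧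
      rmap A (homPt u v) =
        homPt (a * u ^ 2 + b * u * v + c * v ^ 2) (d * u ^ 2 + e * u * v + f * v ^ 2) := by
  obtain ⟨-, h2, h3⟩ := rmap_div h hq 2 natDegree_quadratic_le natDegree_quadratic_le
    (by simpa [coeff_X, coeff_C] using hn) A hA
  by_cases hv : v = 0
  · subst hv
    have hu : u ≠ 0 := by tauto
    have hne : a * u ^ 2 + b * u * 0 + c * 0 ^ 2 ≠ 0 ∨ d * u ^ 2 + e * u * 0 + f * 0 ^ 2 ≠ 0 := by
      simpa [hu] using hn
    refine ⟨hne, ?_⟩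
    have : homPt u 0 = OnePoint.infty := by simp [homPt]
    rw [this, h3, homPt_eq_iff (by simpa [coeff_X, coeff_C] using hn) hne]
    simp [coeff_X, coeff_C]; ring
  · have e1 : a * u ^ 2 + b * u * v + c * v ^ 2 = v ^ 2 * (a * (u / v) ^ 2 + b * (u / v) + c) := by
      field_simp
    have e2 : d * u ^ 2 + e * u * v + f * v ^ 2 = v ^ 2 * (d * (u / v) ^ 2 + e * (u / v) + f) := by
      field_simp
    have hev := h.eval_ne_zero_or (u / v)
    have hne : a * u ^ 2 + b * u * v + c * v ^ 2 ≠ 0 ∨ d * u ^ 2 + e * u * v + f * v ^ 2 ≠ 0 := by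
      rw [e1, e2]; simpa [hv] using hev
    refine ⟨hne, ?_⟩
    have : homPt u v = ((u / v : ℂ) : OnePoint ℂ) := by simp [homPt, hv]
    rw [this, h2, homPt_eq_iff hev hne, e1, e2]
    simp; ring

theorem exists_root_quadratic {a : ℂ} (ha : a ≠ 0) (b c : ℂ) :
    ∃ z : ℂ, a * z ^ 2 + b * z + c = 0 := by
  have : (C a * X ^ 2 + C b * X + C c).degree ≠ 0 := by
    rw [degree_quadratic ha]; decide
  obtain ⟨z, hz⟩ := IsAlgClosed.exists_root _ this
  exact ⟨z, by simpa using hz⟩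

/-- The resultant of two coprime polynomials of formal degree two does not vanish, provided that
the corresponding binary forms have no common zero at infinity (`hn`). -/
theorem resultant_ne_zero {a b c d e f : ℂ}
    (h : IsCoprime (C a * X ^ 2 + C b * X + C c) (C d * X ^ 2 + C e * X + C f))
    (hn : a ≠ 0 ∨ d ≠ 0) :
    (a * f - c * d) ^ 2 - (a * e - b * d) * (b * f - c * e) ≠ 0 := by
  intro h0
  have hev : ∀ z : ℂ, a * z ^ 2 + b * z + c ≠ 0 ∨ d * z ^ 2 + e * z + f ≠ 0 := fun z => by
    simpa using h.eval_ne_zero_or z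
  -- If `a ≠ 0`, the resultant is `a ^ 2` times the product of the values of the second form at the roots
  -- of the first one; here the second root is `-b / a - z`.
  have main : ∀ a b c d e f : ℂ, a ≠ 0 →
      (∀ z : ℂ, a * z ^ 2 + b * z + c ≠ 0 ∨ d * z ^ 2 + e * z + f ≠ 0) →
      (a * f - c * d) ^ 2 - (a * e - b * d) * (b * f - c * e) = 0 → False := by
    intro a b c d e f ha hev h0
    obtain ⟨z, hz⟩ := exists_root_quadratic ha b c
    obtain rfl : c = -(a * z ^ 2 + b * z) := by linear_combination hz
    obtain ⟨y, rfl⟩ : ∃ y, b = -(a * (y + z)) := ⟨-b / a - z, by field_simp; ring⟩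
    have hprod : a ^ 2 * ((d * z ^ 2 + e * z + f) * (d * y ^ 2 + e * y + f)) = 0 := by
      linear_combination h0
    rcases mul_eq_zero.1 ((mul_eq_zero.1 hprod).resolve_left (pow_ne_zero 2 ha)) with hz' | hy'
    · exact (hev z).elim (fun k => k (by ring)) (fun k => k hz')
    · exact (hev y).elim (fun k => k (by ring)) (fun k => k hy')
  rcases hn with hn | hn
  · exact main a b c d e f hn hev h0
  · exact main d e f a b c hn (fun z => (hev z).symm) (by linear_combination h0)

theorem quadratic_coeffs_eq_zero {k l m k' l' m' : ℂ}
    (h : ∀ z : ℂ, (k * z ^ 2 + l * z + m) * (k' * z ^ 2 + l' * z + m') = 0) :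
    (k = 0 ∧ l = 0 ∧ m = 0) ∨ (k' = 0 ∧ l' = 0 ∧ m' = 0) := by
  have hp : (C k * X ^ 2 + C l * X + C m) * (C k' * X ^ 2 + C l' * X + C m') = (0 : ℂ[X]) :=
    Polynomial.funext fun z => by simpa using h z
  have aux : ∀ k l m : ℂ, C k * X ^ 2 + C l * X + C m = (0 : ℂ[X]) → k = 0 ∧ l = 0 ∧ m = 0 := by
    intro k l m h
    refine ⟨?_, ?_, ?_⟩
    · simpa [coeff_X, coeff_C] using congrArg (coeff · 2) h
    · simpa [coeff_X, coeff_C] using congrArg (coeff · 1) h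
    · simpa using congrArg (coeff · 0) h
  exact (mul_eq_zero.1 hp).imp (aux _ _ _) (aux _ _ _)

theorem statement_5 (a b c d e f : ℂ) (A μA : RatFunc ℂ)
    (hco : IsCoprime (C a * X ^ 2 + C b * X + C c) (C d * X ^ 2 + C e * X + C f))
    (hdeg : max (C a * X ^ 2 + C b * X + C c).natDegree
        (C d * X ^ 2 + C e * X + C f).natDegree = 2)
    (hAdef : A = algebraMap (Polynomial ℂ) (RatFunc ℂ) (C a * X ^ 2 + C b * X + C c) /
        algebraMap (Polynomial ℂ) (RatFunc ℂ) (C d * X ^ 2 + C e * X + C f))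
    (hμdef : μA =
        algebraMap (Polynomial ℂ) (RatFunc ℂ) (C (c * d - a * f) * X + C (c * e - b * f)) /
        algebraMap (Polynomial ℂ) (RatFunc ℂ) (C (a * e - b * d) * X + C (a * f - c * d))) :
    rdeg μA = 1 ∧ rmap A ∘ rmap μA = rmap A ∧ rmap μA ≠ id ∧ rmap μA ∘ rmap μA = id ∧
      ∀ μ : RatFunc ℂ, rdeg μ = 1 → rmap A ∘ rmap μ = rmap A →
        (rmap μ = id ∨ rmap μ = rmap μA) := by
  have hn : a ≠ 0 ∨ d ≠ 0 := by
    by_contra! h0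
    rw [h0.1, h0.2] at hdeg
    simp only [C_0, zero_mul, zero_add] at hdeg
    have h1 := natDegree_linear_le (a := b) (b := c)
    have h2 := natDegree_linear_le (a := e) (b := f)
    omega
  have hR := resultant_ne_zero hco hn
  have hQ : C d * X ^ 2 + C e * X + C f ≠ 0 := by
    intro h0
    have hd : d = 0 := by simpa [coeff_X, coeff_C] using congrArg (coeff · 2) h0
    have he : e = 0 := by simpa [coeff_X, coeff_C] using congrArg (coeff · 1) h0
    have hf : f = 0 := by simpa [coeff_X, coeff_C] using congrArg (coeff · 0) h0
    exact hR (by rw [hd, he, hf]; ring)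
  have hA := rmap_quadratic hco hQ hn A hAdef
  have hβ : c * d - a * f ≠ 0 ∨ a * e - b * d ≠ 0 := by
    by_contra! h0
    exact hR (by linear_combination (c * d - a * f) * h0.1 - (b * f - c * e) * h0.2)
  have hμQ : C (a * e - b * d) * X + C (a * f - c * d) ≠ 0 := by
    intro h0
    have h1 : a * e - b * d = 0 := by simpa [coeff_C] using congrArg (coeff · 1) h0
    have h2 : a * f - c * d = 0 := by simpa using congrArg (coeff · 0) h0
    exact hR (by rw [h1, h2]; ring)
  -- Bezout identity: `α (-β X - γ) + β (α X + β) = β² - α γ`, the resultant.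
  have hμco : IsCoprime (C (c * d - a * f) * X + C (c * e - b * f))
      (C (a * e - b * d) * X + C (a * f - c * d)) := by
    set R := (a * f - c * d) ^ 2 - (a * e - b * d) * (b * f - c * e) with hRdef
    refine ⟨C ((a * e - b * d) / R), C ((a * f - c * d) / R), Polynomial.funext fun z => ?_⟩
    simp only [eval_add, eval_mul, eval_C, eval_X, eval_one]
    field_simp
    rw [hRdef]; ring
  obtain ⟨hμ1, hμ⟩ := rmap_linear hμco hμQ hβ μA hμdef
  have hbil : ∀ u v s t : ℂ, (u ≠ 0 ∨ v ≠ 0) → (s ≠ 0 ∨ t ≠ 0) →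
      (rmap μA (homPt u v) = homPt s t ↔
        (a * e - b * d) * (u * s) + (a * f - c * d) * (u * t + v * s)
          + (b * f - c * e) * (v * t) = 0) := by
    intro u v s t huv hst
    rw [(hμ u v huv).2, homPt_eq_iff (hμ u v huv).1 hst]
    constructor <;> intro h <;> linear_combination -h
  have hfib : ∀ x y : OnePoint ℂ, rmap A x = rmap A y ↔ x = y ∨ rmap μA x = y := by
    intro x y
    obtain ⟨u, v, huv, rfl⟩ := exists_homPt x
    obtain ⟨s, t, hst, rfl⟩ := exists_homPt y
    rw [hbil u v s t huv hst, (hA u v huv).2, (hA s t hst).2,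
      homPt_eq_iff (hA u v huv).1 (hA s t hst).1, homPt_eq_iff huv hst,
      ← sub_eq_zero, ← sub_eq_zero (a := u * t), ← mul_eq_zero]
    constructor <;> intro h <;> linear_combination h
  refine ⟨hμ1, ?_, ?_, ?_, ?_⟩
  · funext x
    exact ((hfib x (rmap μA x)).2 (Or.inr rfl)).symm
  · intro hid
    have hfix : ∀ u v : ℂ, (u ≠ 0 ∨ v ≠ 0) → _ := fun u v huv =>
      (hbil u v u v huv huv).1 (by rw [hid]; rfl)
    have h1 := hfix 1 0 (by simp)
    have h2 := hfix 0 1 (by simp)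
    have h3 := hfix 1 1 (by simp)
    have hα : a * e - b * d = 0 := by linear_combination h1
    have hβ0 : a * f - c * d = 0 := by linear_combination (h3 - h1 - h2) / 2
    exact hR (by rw [hα, hβ0]; ring)
  -- The relation between `x` and `μ x` is a symmetric one, so `μ` is an involution.
  · funext x
    obtain ⟨u, v, huv, rfl⟩ := exists_homPt x
    obtain ⟨s, t, hst, h⟩ := exists_homPt (rmap μA (homPt u v))
    change rmap μA (rmap μA (homPt u v)) = homPt u v
    rw [h, hbil s t u v hst huv]
    linear_combination (hbil u v s t huv hst).1 h
  · intro μ hdμ hcomp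
    obtain ⟨p, q, hpq⟩ := exists_eq_X_add_C_of_natDegree_le_one
      (p := μ.num) (by rw [← hdμ]; exact le_max_left _ _)
    obtain ⟨r, s, hrs⟩ := exists_eq_X_add_C_of_natDegree_le_one
      (p := μ.denom) (by rw [← hdμ]; exact le_max_right _ _)
    have hpr : p ≠ 0 ∨ r ≠ 0 := by
      by_contra! h0
      rw [rdeg, hpq, hrs, h0.1, h0.2] at hdμ
      simp at hdμ
    have hco' := RatFunc.isCoprime_num_denom μ
    have hd' := μ.denom_ne_zero
    have hμ' := (RatFunc.num_div_denom μ).symm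
    rw [hpq, hrs] at hco' hμ'
    rw [hrs] at hd'
    obtain ⟨-, hM⟩ := rmap_linear hco' hd' hpr μ hμ'
    have hdich : ∀ x, rmap μ x = x ∨ rmap μA x = rmap μ x := fun x =>
      ((hfib x (rmap μ x)).1 (congrFun hcomp x).symm).imp Eq.symm id
    -- The first factor vanishes where `μ` agrees with the identity, the second one where it
    -- agrees with `μA`.
    have hprod : ∀ z : ℂ, (r * z ^ 2 + (s - p) * z + (-q)) *
        (((a * e - b * d) * p + (a * f - c * d) * r) * z ^ 2 +
          ((a * e - b * d) * q + (a * f - c * d) * (p + s) + (b * f - c * e) * r) * z +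
          ((a * f - c * d) * q + (b * f - c * e) * s)) = 0 := by
      intro z
      have hz : z ≠ 0 ∨ (1 : ℂ) ≠ 0 := by simp
      have hk := hM z 1 hz
      rw [mul_eq_zero]
      rcases hdich (homPt z 1) with h | h
      · left
        rw [hk.2, homPt_eq_iff hk.1 hz] at h
        linear_combination -h
      · right
        rw [hk.2, hbil _ _ _ _ hz hk.1] at h
        linear_combination h
    rcases quadratic_coeffs_eq_zero hprod with ⟨h1, h2, h3⟩ | ⟨h1, h2, h3⟩
    · left
      funext x
      obtain ⟨u, v, huv, rfl⟩ := exists_homPt x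
      have hk := hM u v huv
      rw [hk.2, id, homPt_eq_iff hk.1 huv]
      linear_combination (-u ^ 2) * h1 - u * v * h2 - v ^ 2 * h3
    · right
      funext x
      obtain ⟨u, v, huv, rfl⟩ := exists_homPt x
      have hk := hM u v huv
      symm
      rw [hk.2, hbil _ _ _ _ huv hk.1]
      linear_combination u ^ 2 * h1 + u * v * h2 + v ^ 2 * h3

end
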